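/- With a(n) = f_n(A_n) the size of the even set-alternating domain (and a(1) = 1), for every n ≥ 1 the number a(n) is odd if and only if n = 1 or n = 2^t for some integer t ≥ 2. -/

import Mathlib

/-- `σ` is in the set-alternating domain of `A` on alternatives `{1,…,n}`
(alternative `m` is represented by the index `m-1 : Fin n`; `σ x` is the rank
of alternative `x`, smaller rank = better). For every triple `i < j < k`:
if the middle alternative `j` (whose 1-based name is `j+1`) is in `A`, then
`i` is never ranked below both `j` and `k` (1N3); otherwise `k` is never
ranked above both `i` and `j` (3N1). -/
def inSetAltDomain (n : ℕ) (A : Finset ℕ) (σ : Equiv.Perm (Fin n)) : Prop :=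
  ∀ i j k : Fin n, i < j → j < k →
    (((j : ℕ) + 1 ∈ A) → ¬ (σ j < σ i ∧ σ k < σ i)) ∧
    (((j : ℕ) + 1 ∉ A) → ¬ (σ k < σ i ∧ σ k < σ j))

/-- The set-alternating domain `D_n(A)`. -/
def setAltDomain (n : ℕ) (A : Finset ℕ) : Set (Equiv.Perm (Fin n)) :=
  {σ | inSetAltDomain n A σ}

/-- `f_n(A)`, the cardinality of `D_n(A)`. -/
noncomputable def fsize (n : ℕ) (A : Finset ℕ) : ℕ := (setAltDomain n A).ncard

/-- The even set-alternating scheme: even numbers `2 ≤ j ≤ n-2` (`n` even) or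
`2 ≤ j ≤ n-1` (`n` odd). -/
def evenA (n : ℕ) : Finset ℕ :=
  if Even n then (Finset.Icc 2 (n-2)).filter (fun j => Even j)
  else (Finset.Icc 2 (n-1)).filter (fun j => Even j)

/-- `a(n) = f_n(A_n)`, the size of the even set-alternating domain. -/
noncomputable def aseq (n : ℕ) : ℕ := fsize n (evenA n)

/-!
Build the orders of `D_n(A)` by inserting the alternatives in increasing order. If at most `m` of
the worst-ranked alternatives may lie below the next one, the order has `m + 1` extensions, and the
values of `m` for these extensions depend only on `m` and on whether `n + 1 ∈ A`. The resulting
recursion gives `f_{n+2}(A) = 2 f_{n+1}(A)` whenever `n + 1 ∈ A`, so `a(n)` is even for odd `n ≥ 3`.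
For even `n` its reduction mod 2 is solved by the coefficients of the powers of the Catalan series
`C = 1 + X C ^ 2`, which satisfy `C ^ (m + 1) = C ^ m + X C ^ (m + 2)`. Hence `a(2 r + 2)` has the
parity of the Catalan number of index `r` for `r ≥ 1`, and that number is odd exactly if `r + 1` is
a power of two, because `C ^ 2` is `C (X ^ 2)` mod 2.
-/

namespace SetAlternating

open Finset

section Insertion

variable {n : ℕ} {A : Finset ℕ} {σ : Equiv.Perm (Fin n)} {k : Fin (n + 1)}

/-- The ranking obtained from `σ` by inserting a new largest alternative just above the `k`
worst-ranked alternatives of `σ`, that is, at rank `n - k`. -/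
def insertLast (k : Fin (n + 1)) (σ : Equiv.Perm (Fin n)) : Equiv.Perm (Fin (n + 1)) :=
  finSuccEquivLast.trans (σ.optionCongr.trans (finSuccEquiv' k.rev).symm)

lemma insertLast_last : insertLast k σ (Fin.last n) = k.rev := by
  simp [insertLast]

lemma insertLast_castSucc (i : Fin n) :
    insertLast k σ i.castSucc = k.rev.succAbove (σ i) := by
  simp [insertLast]

lemma val_insertLast_castSucc (i : Fin n) :
    (insertLast k σ i.castSucc : ℕ) = if n ≤ σ i + k then (σ i : ℕ) + 1 else σ i := by
  grind [insertLast_castSucc, Fin.succAbove, Fin.lt_def]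

lemma insertLast_bijective :
    Function.Bijective fun q : Equiv.Perm (Fin n) × Fin (n + 1) ↦ insertLast q.2 q.1 := by
  rw [Fintype.bijective_iff_injective_and_card]
  refine ⟨?_, by simp [Fintype.card_perm, Nat.factorial_succ, mul_comm]⟩
  rintro ⟨σ, k⟩ ⟨τ, l⟩ (h : insertLast k σ = insertLast l τ)
  obtain rfl : k = l := by
    simpa [insertLast_last] using congrArg (· (Fin.last n)) h
  suffices σ = τ by rw [this]
  ext i
  have hi := congrArg (· i.castSucc) h
  simp only [insertLast_castSucc] at hi
  rw [Fin.succAbove_right_injective hi]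

/-- The never conditions on the triples `i < j < n`, for the order in which a new largest
alternative `n` is inserted into `σ` just above its `k` worst-ranked alternatives; the new
alternative is then ranked above `i` exactly if `n ≤ σ i + k`. -/
def AdmitsLast (A : Finset ℕ) (σ : Equiv.Perm (Fin n)) (k : ℕ) : Prop :=
  ∀ i j : Fin n, i < j →
    ((j : ℕ) + 1 ∈ A → ¬ (σ j < σ i ∧ n ≤ σ i + k)) ∧
    ((j : ℕ) + 1 ∉ A → ¬ (n ≤ σ i + k ∧ n ≤ σ j + k))

lemma inSetAltDomain_insertLast :
    inSetAltDomain (n + 1) A (insertLast k σ) ↔ inSetAltDomain n A σ ∧ AdmitsLast A σ k := by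
  have rev_lt (i : Fin n) : k.rev < k.rev.succAbove (σ i) ↔ n ≤ σ i + k := by
    rw [Fin.lt_succAbove_iff_le_castSucc, Fin.le_def, Fin.val_rev, Fin.val_castSucc]
    omega
  have not_last_lt (i : Fin (n + 1)) : ¬ Fin.last n < i := i.le_last.not_gt
  simp only [inSetAltDomain, AdmitsLast, Fin.forall_fin_succ', insertLast_castSucc,
    insertLast_last, Fin.succAbove_lt_succAbove_iff, Fin.castSucc_lt_castSucc_iff, rev_lt,
    Fin.castSucc_lt_last, Fin.val_castSucc, forall_and, not_last_lt, false_imp_iff, true_imp_iff,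
    implies_true, and_true]
  tauto

lemma AdmitsLast.mono {k l : ℕ} (h : AdmitsLast A σ l) (hkl : k ≤ l) : AdmitsLast A σ k := by
  grind [AdmitsLast]

lemma admitsLast_zero : AdmitsLast A σ 0 := by
  grind [AdmitsLast]

open Classical in
/-- The largest `k` such that a new largest alternative may be inserted just above the `k`
worst-ranked alternatives of `σ`. The order `σ` of `D_n(A)` thus has `slack A σ + 1` extensions to
`D_{n+1}(A)`. -/
noncomputable def slack (A : Finset ℕ) (σ : Equiv.Perm (Fin n)) : ℕ :=
  Nat.findGreatest (AdmitsLast A σ) n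

lemma slack_le : slack A σ ≤ n := by
  classical exact Nat.findGreatest_le n

lemma admitsLast_iff_le_slack {q : ℕ} (hq : q ≤ n) : AdmitsLast A σ q ↔ q ≤ slack A σ := by
  classical
  refine ⟨fun h ↦ Nat.le_findGreatest hq h, AdmitsLast.mono ?_⟩
  exact Nat.findGreatest_spec (Nat.zero_le n) admitsLast_zero

lemma slack_eq_of_forall_admitsLast_iff {m : ℕ} (hm : m ≤ n)
    (h : ∀ q ≤ n, AdmitsLast A σ q ↔ q ≤ m) : slack A σ = m :=
  le_antisymm ((h _ slack_le).1 ((admitsLast_iff_le_slack slack_le).2 le_rfl))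
    ((admitsLast_iff_le_slack hm).1 ((h m hm).2 le_rfl))

lemma exists_val_eq_sub_one (hn : 0 < n) : ∃ i, (σ i : ℕ) = n - 1 :=
  ⟨σ.symm ⟨n - 1, by omega⟩, by simp⟩

lemma admitsLast_insertLast {q : ℕ} :
    AdmitsLast A (insertLast k σ) q ↔
      (∀ i j : Fin n, i < j →
        ((j : ℕ) + 1 ∈ A → ¬ (σ j < σ i ∧ n + 1 ≤ insertLast k σ i.castSucc + q)) ∧
        ((j : ℕ) + 1 ∉ A → ¬ (n + 1 ≤ insertLast k σ i.castSucc + q ∧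
          n + 1 ≤ insertLast k σ j.castSucc + q))) ∧
      ∀ i : Fin n, (n + 1 ∈ A → ¬ (n ≤ σ i + k ∧ n ≤ σ i + q)) ∧
        (n + 1 ∉ A → ¬ (n + 1 ≤ insertLast k σ i.castSucc + q ∧ k < q)) := by
  have not_last_lt (i : Fin (n + 1)) : ¬ Fin.last n < i := i.le_last.not_gt
  have last_lt (i : Fin n) : insertLast k σ (Fin.last n) < insertLast k σ i.castSucc ↔
      n ≤ σ i + k := by
    rw [Fin.lt_def, insertLast_last, val_insertLast_castSucc, Fin.val_rev]
    grind
  have lt_iff (i j : Fin n) : insertLast k σ j.castSucc < insertLast k σ i.castSucc ↔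
      σ j < σ i := by
    simp only [insertLast_castSucc, Fin.succAbove_lt_succAbove_iff]
  have le_last : n + 1 ≤ (insertLast k σ (Fin.last n) : ℕ) + q ↔ k < q := by
    rw [insertLast_last, Fin.val_rev]
    omega
  simp only [AdmitsLast, Fin.forall_fin_succ', last_lt, lt_iff, Fin.castSucc_lt_castSucc_iff,
    Fin.castSucc_lt_last, Fin.val_castSucc, Fin.val_last, not_last_lt, le_last, false_imp_iff,
    true_imp_iff, implies_true, and_true, forall_and]
  grind [val_insertLast_castSucc]

lemma slack_insertLast_zero_of_mem (hA : n + 1 ∈ A) :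
    slack A (insertLast 0 σ) = slack A σ + 1 := by
  refine slack_eq_of_forall_admitsLast_iff (by simpa using slack_le) fun q hq ↦ ?_
  rw [← Nat.sub_le_iff_le_add, ← admitsLast_iff_le_slack (by omega), admitsLast_insertLast]
  simp only [AdmitsLast, val_insertLast_castSucc]
  grind

lemma slack_insertLast_of_mem (hA : n + 1 ∈ A) (hk : 0 < k) :
    slack A (insertLast k σ) = 0 := by
  refine slack_eq_of_forall_admitsLast_iff (Nat.zero_le _) fun q _ ↦
    ⟨fun h ↦ ?_, admitsLast_zero.mono⟩
  obtain ⟨worst, h_worst⟩ : ∃ i, (σ i : ℕ) = n - 1 := exists_val_eq_sub_one (by omega)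
  have not_both_above : ¬ (n ≤ σ worst + k ∧ n ≤ σ worst + q) :=
    ((admitsLast_insertLast.1 h).2 worst).1 hA
  omega

lemma slack_insertLast_of_notMem (hA : n + 1 ∉ A) (h : AdmitsLast A σ k) :
    slack A (insertLast k σ) = max (k : ℕ) 1 := by
  refine slack_eq_of_forall_admitsLast_iff (by omega) fun q _ ↦ ⟨fun hq ↦ ?_, fun hq ↦ ?_⟩
  · by_contra! hlt
    obtain ⟨worst, h_worst⟩ : ∃ i, (σ i : ℕ) = n - 1 := exists_val_eq_sub_one (by omega)
    have not_top : ¬ (n + 1 ≤ insertLast k σ worst.castSucc + q ∧ k < q) :=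
      ((admitsLast_insertLast.1 hq).2 worst).2 hA
    grind [val_insertLast_castSucc]
  · rw [admitsLast_insertLast]
    simp only [AdmitsLast, val_insertLast_castSucc] at h ⊢
    grind

end Insertion

section Counting

variable {n : ℕ} {A : Finset ℕ}

open Classical in
/-- The sum of `φ (slack A σ)` over all `σ` in `D_n(A)`. As the slacks of the extensions of `σ`
depend on `slack A σ` only, these sums obey a recursion in `n`. -/
noncomputable def slackSum (n : ℕ) (A : Finset ℕ) (φ : ℕ → ℕ) : ℕ :=
  ∑ σ : Equiv.Perm (Fin n) with inSetAltDomain n A σ, φ (slack A σ)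

lemma fsize_eq_slackSum_one : fsize n A = slackSum n A fun _ ↦ 1 := by
  classical
  rw [fsize, slackSum, ← card_eq_sum_ones, ← Set.ncard_coe_finset, coe_filter_univ, setAltDomain]

lemma slackSum_zero (φ : ℕ → ℕ) : slackSum 0 A φ = φ 0 := by
  have slack_eq_zero (σ : Equiv.Perm (Fin 0)) : slack A σ = 0 := Nat.le_zero.1 slack_le
  simp [slackSum, slack_eq_zero, inSetAltDomain]

lemma slackSum_const_mul (c : ℕ) (φ : ℕ → ℕ) :
    (slackSum n A fun m ↦ c * φ m) = c * slackSum n A φ :=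
  (mul_sum _ _ _).symm

lemma slackSum_succ {next : ℕ → ℕ → ℕ}
    (hnext : ∀ (σ : Equiv.Perm (Fin n)) (k : Fin (n + 1)), AdmitsLast A σ k →
      slack A (insertLast k σ) = next (slack A σ) k) (φ : ℕ → ℕ) :
    slackSum (n + 1) A φ = slackSum n A fun m ↦ ∑ k ∈ range (m + 1), φ (next m k) := by
  classical
  simp only [slackSum, sum_filter]
  rw [← insertLast_bijective.sum_comp, Fintype.sum_prod_type]
  refine sum_congr rfl fun σ _ ↦ ?_
  by_cases hσ : inSetAltDomain n A σ
  swap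
  · simp [inSetAltDomain_insertLast, hσ]
  calc ∑ k : Fin (n + 1), (if inSetAltDomain (n + 1) A (insertLast k σ) then
        φ (slack A (insertLast k σ)) else 0)
      = ∑ k : Fin (n + 1), if (k : ℕ) ≤ slack A σ then φ (next (slack A σ) k) else 0 := by
        refine sum_congr rfl fun k _ ↦ ?_
        simp only [inSetAltDomain_insertLast, hσ, true_and,
          ← admitsLast_iff_le_slack (Nat.lt_succ_iff.1 k.is_lt)]
        exact ite_congr rfl (fun hk ↦ by rw [hnext σ k hk]) fun _ ↦ rfl
    _ = ∑ k ∈ range (n + 1) with k ≤ slack A σ, φ (next (slack A σ) k) := by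
        rw [Fin.sum_univ_eq_sum_range fun k ↦ if k ≤ slack A σ then φ (next (slack A σ) k) else 0,
          sum_filter]
    _ = ∑ k ∈ range (slack A σ + 1), φ (next (slack A σ) k) := by
        refine sum_congr ?_ fun _ _ ↦ rfl
        ext k
        have := slack_le (A := A) (σ := σ)
        simp only [mem_filter, mem_range]
        omega
    _ = _ := (if_pos hσ).symm

lemma slackSum_succ_of_mem (hA : n + 1 ∈ A) (φ : ℕ → ℕ) :
    slackSum (n + 1) A φ = slackSum n A fun m ↦ φ (m + 1) + m * φ 0 := by
  rw [slackSum_succ (next := fun m k ↦ if k = 0 then m + 1 else 0) fun σ k _ ↦ ?_]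
  · simp [sum_range_succ', add_comm]
  · rcases eq_or_ne k 0 with rfl | hk
    · simpa using slack_insertLast_zero_of_mem hA
    · simpa [Fin.val_eq_zero_iff, hk] using slack_insertLast_of_mem hA (Fin.pos_of_ne_zero hk)

lemma slackSum_succ_of_notMem (hA : n + 1 ∉ A) (φ : ℕ → ℕ) :
    slackSum (n + 1) A φ = slackSum n A fun m ↦ φ 1 + ∑ k ∈ range m, φ (k + 1) := by
  rw [slackSum_succ (next := fun _ k ↦ max k 1) fun σ k ↦ slack_insertLast_of_notMem hA]
  simp [sum_range_succ', add_comm]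

lemma fsize_succ : fsize (n + 1) A = slackSum n A fun m ↦ m + 1 := by
  rw [fsize_eq_slackSum_one]
  by_cases hA : n + 1 ∈ A
  · simp [slackSum_succ_of_mem hA, add_comm]
  · simp [slackSum_succ_of_notMem hA, add_comm]

lemma fsize_add_two_of_mem (hA : n + 1 ∈ A) : fsize (n + 2) A = 2 * fsize (n + 1) A := by
  rw [fsize_succ, slackSum_succ_of_mem hA, fsize_succ, ← slackSum_const_mul]
  congr 1
  funext m
  ring

end Counting

section EvenScheme

/-- The number of ways to extend an order of slack `m` on an odd number of alternatives by
`2 * r + 1` further, larger alternatives when the even alternatives satisfy `1N3` and the odd ones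
`3N1`. -/
def evenExtensions : ℕ → ℕ → ℕ
  | 0, m => m + 1
  | r + 1, m =>
    (m + 1) * evenExtensions r 1 + ∑ k ∈ range (m + 1), evenExtensions r (k + 1)

variable {A : Finset ℕ}

lemma slackSum_evenExtensions {s : ℕ} (hA : ∀ j ∈ Icc 1 (2 * s + 1), j ∈ A ↔ Even j) (r : ℕ) :
    slackSum (2 * s + 1) A (evenExtensions r) = evenExtensions (r + s) 1 := by
  induction s generalizing r with
  | zero =>
    have notMem : 0 + 1 ∉ A := by simp [hA]
    simp [slackSum_succ_of_notMem notMem, slackSum_zero]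
  | succ s ih =>
    have mem : 2 * s + 1 + 1 ∈ A := by
      rw [hA _ (by simp)]
      simp [parity_simps]
    have notMem : 2 * (s + 1) + 1 ∉ A := by
      rw [hA _ (by simp)]
      simp [parity_simps]
    have slackSum_add_two : slackSum (2 * (s + 1) + 1) A (evenExtensions r) =
        slackSum (2 * s + 1) A (evenExtensions (r + 1)) := by
      rw [slackSum_succ_of_notMem notMem, show 2 * (s + 1) = 2 * s + 1 + 1 by ring,
        slackSum_succ_of_mem mem]
      congr 1
      funext m
      simp only [evenExtensions, range_zero, sum_empty]
      ring
    rw [slackSum_add_two, ih (fun j hj ↦ hA j (by grind)), show r + (s + 1) = r + 1 + s by ring]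

lemma mem_evenA {n j : ℕ} (hj : 1 ≤ j) (hjn : j < n) : j ∈ evenA n ↔ Even j := by
  unfold evenA
  split_ifs with hn <;> simp only [mem_filter, mem_Icc, Nat.even_iff] at hn ⊢ <;> omega

lemma aseq_one : aseq 1 = 1 := by
  rw [aseq, fsize_succ, slackSum_zero]

lemma aseq_two_mul_add_two (r : ℕ) : aseq (2 * r + 2) = evenExtensions r 1 := by
  have hA : ∀ j ∈ Icc 1 (2 * r + 1), j ∈ evenA (2 * r + 2) ↔ Even j := fun j hj ↦
    mem_evenA (mem_Icc.1 hj).1 (Nat.lt_succ_iff.2 (mem_Icc.1 hj).2)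
  rw [aseq, fsize_succ, ← zero_add r, ← slackSum_evenExtensions (by simpa using hA), zero_add]
  rfl

lemma even_aseq_two_mul_add_three (r : ℕ) : Even (aseq (2 * r + 3)) := by
  have mem : 2 * r + 1 + 1 ∈ evenA (2 * r + 3) := by
    rw [mem_evenA (by omega) (by omega)]
    simp [parity_simps]
  rw [aseq, fsize_add_two_of_mem mem]
  exact even_two_mul _

end EvenScheme

section CatalanParity

open PowerSeries

lemma zmod_pow_eq_expand (p : ℕ) [Fact p.Prime] (f : (ZMod p)⟦X⟧) :
    f ^ p = expand p (NeZero.ne p) f := by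
  have h := MvPowerSeries.map_frobenius_expand (σ := Unit) (R := ZMod p) p (NeZero.ne p) (f := f)
  rw [ZMod.frobenius_zmod] at h
  simpa [expand] using h.symm

lemma catalan_succ_zmod_two (n : ℕ) :
    (catalan (n + 1) : ZMod 2) = if 2 ∣ n then (catalan (n / 2) : ZMod 2) else 0 := by
  let c : (ZMod 2)⟦X⟧ := map (Nat.castRingHom (ZMod 2)) catalanSeries
  have hc : c ^ 2 * X + 1 = c := by
    simpa [c] using congrArg (map (Nat.castRingHom (ZMod 2))) catalanSeries_sq_mul_X_add_one
  calc (catalan (n + 1) : ZMod 2) = coeff (n + 1) (c ^ 2 * X + 1) := by rw [hc]; simp [c]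
    _ = coeff n (c ^ 2) := by simp [coeff_succ_mul_X, coeff_one]
    _ = if 2 ∣ n then (catalan (n / 2) : ZMod 2) else 0 := by
      simp [zmod_pow_eq_expand, coeff_expand, c]

lemma odd_catalan_iff (n : ℕ) : Odd (catalan n) ↔ ∃ t, n + 1 = 2 ^ t := by
  induction n using Nat.strong_induction_on with
  | _ n ih =>
    rcases n with _ | n
    · simpa using ⟨0, rfl⟩
    rw [← ZMod.natCast_eq_one_iff_odd, catalan_succ_zmod_two]
    by_cases hn : 2 ∣ n
    · rw [if_pos hn, ZMod.natCast_eq_one_iff_odd, ih _ (by omega)]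
      constructor
      · rintro ⟨t, ht⟩
        exact ⟨t + 1, by rw [pow_succ]; omega⟩
      · rintro ⟨_ | t, ht⟩
        · simp at ht
        · exact ⟨t, by rw [pow_succ] at ht; omega⟩
    · rw [if_neg hn]
      refine iff_of_false zero_ne_one ?_
      rintro ⟨_ | t, ht⟩
      · simp at ht
      · rw [pow_succ] at ht
        omega

lemma coeff_catalanSeries_pow_succ (n m : ℕ) :
    coeff (n + 1) (catalanSeries ^ (m + 1)) =
      coeff (n + 1) (catalanSeries ^ m) + coeff n (catalanSeries ^ (m + 2)) := by
  have pow_eq : catalanSeries ^ (m + 1) = catalanSeries ^ m + catalanSeries ^ (m + 2) * X := by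
    calc catalanSeries ^ (m + 1) = catalanSeries ^ m * (catalanSeries ^ 2 * X + 1) := by
          rw [catalanSeries_sq_mul_X_add_one, pow_succ]
      _ = catalanSeries ^ m + catalanSeries ^ (m + 2) * X := by ring
  rw [pow_eq, map_add, coeff_succ_mul_X]

lemma evenExtensions_zmod_two (r m : ℕ) :
    (evenExtensions r (m + 1) : ZMod 2) =
      coeff (r + 1) (catalanSeries ^ m) + if r = 0 then 0 else (catalan r : ZMod 2) := by
  have two_eq_zero : (2 : ZMod 2) = 0 := rfl
  induction r generalizing m with
  | zero =>
    rw [zero_add, coeff_one_pow]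
    simp [evenExtensions, add_assoc, one_add_one_eq_two, two_eq_zero]
  | succ r ih =>
    induction m with
    | zero =>
      have rec_one : evenExtensions (r + 1) 1 =
          2 * evenExtensions r 1 + (evenExtensions r 1 + evenExtensions r 2) := by
        simp [evenExtensions, sum_range_succ]
      rw [rec_one]
      push_cast
      rw [ih 0, ih 1]
      simp [two_eq_zero, coeff_one, add_left_comm, CharTwo.add_self_eq_zero]
    | succ m ihm =>
      have rec_succ : evenExtensions (r + 1) (m + 1 + 1) = evenExtensions (r + 1) (m + 1) +
          (evenExtensions r 1 + evenExtensions r (m + 2 + 1)) := by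
        simp only [evenExtensions, sum_range_succ _ (m + 1 + 1)]
        ring
      rw [rec_succ, coeff_catalanSeries_pow_succ]
      push_cast
      rw [ihm, ih 0, ih (m + 2)]
      simp only [pow_zero, coeff_one, r.succ_ne_zero, if_false, Nat.cast_zero]
      linear_combination (if r = 0 then 0 else (catalan r : ZMod 2)) * two_eq_zero

lemma odd_aseq_two_mul_add_two_iff (r : ℕ) :
    Odd (aseq (2 * r + 2)) ↔ r ≠ 0 ∧ ∃ t, r + 1 = 2 ^ t := by
  rw [aseq_two_mul_add_two, ← odd_catalan_iff, ← ZMod.natCast_eq_one_iff_odd,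
    ← ZMod.natCast_eq_one_iff_odd, ← zero_add 1, evenExtensions_zmod_two]
  by_cases hr : r = 0 <;> simp [hr, coeff_one]

end CatalanParity

end SetAlternating

/-- for `n ≥ 1`, `a(n)` is odd iff `n = 1` or `n = 2^t` with
`t ≥ 2`. -/
theorem stmt18 (n : ℕ) (hn : 1 ≤ n) :
    Odd (aseq n) ↔ (n = 1 ∨ ∃ t : ℕ, 2 ≤ t ∧ n = 2 ^ t) := by
  open SetAlternating in
  rcases Nat.even_or_odd' n with ⟨r, rfl | rfl⟩
  · obtain ⟨r, rfl⟩ : ∃ s, r = s + 1 := ⟨r - 1, by omega⟩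
    rw [mul_add_one, odd_aseq_two_mul_add_two_iff]
    constructor
    · rintro ⟨hr, _ | t, ht⟩
      · omega
      · exact .inr ⟨t + 2, by omega, by rw [pow_succ, ← ht]; ring⟩
    · rintro (h | ⟨_ | t, ht, h⟩)
      · omega
      · omega
      · have pow_ge : 2 ^ 1 ≤ 2 ^ t := Nat.pow_le_pow_right two_pos (by omega)
        rw [pow_succ] at h
        exact ⟨by omega, t, by omega⟩
  · rcases r with _ | r
    · simp [aseq_one]
    · refine iff_of_false (Nat.not_odd_iff_even.2 (even_aseq_two_mul_add_three r)) ?_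
      rintro (h | ⟨_ | t, ht, h⟩) <;> grind
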